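/- If the convex conjugate V of a utility function U satisfies EAE(V) < ∞, then there exist constants x₀ > 0 and k > 0 such that 0 ≤ U_c(x) ≤ k U(x) for all x ∈ (x₀, ∞), where U_c is the concave envelope of U. -/

import Mathlib

/-!
The envelope lies below every affine function `x ↦ V y + y x` with `y > 0`
(`concaveEnvelope_le_affine`), so it suffices to pick, for each large `x`, a slope `y` with
`V y + x y ≤ k U x`.

If `U` is bounded, `U_c ≤ sup U` and the claim is immediate. Otherwise `V` blows up at `0`, and
for large `x` the function `y ↦ V y + (x / 2) y` attains its minimum over `(0, ∞)` at a small `y`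
(`exists_conj_minimizer`). Minimality says `-x / 2 ∈ ∂V y`, so the elasticity bound gives
`(x / 2) y ≤ C V y` and hence `V y + x y ≤ (1 + 2 C) V y`. Moving to the slope `(1 + δ) y` with
`δ = 1 / (2 C)` costs at most half of `V y`. At this larger slope no point `z > x` comes close to
the supremum defining `V`, since the subgradient at `y` is only `-x / 2`. Therefore
`V y / 2 ≤ V ((1 + δ) y) ≤ U x`.
-/

open MeasureTheory Filter Set Topology ENNReal

noncomputable section

/-- The utility function extended to all of `ℝ`, with value `−∞` on `(−∞,0)` and
`U(0) := lim_{x ↓ 0} U(x)` (here, by monotonicity, the infimum over `(0,∞)`). -/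
def Uext (U : ℝ → ℝ) : ℝ → EReal := fun x =>
  if 0 < x then (U x : EReal)
  else if x = 0 then ⨅ z : {z : ℝ // 0 < z}, ((U z.1 : ℝ) : EReal)
  else ⊥

/-- A (possibly non-concave) utility function. -/
structure IsUtility (U : ℝ → ℝ) : Prop where
  mono : ∀ ⦃x y : ℝ⦄, 0 < x → x ≤ y → U x ≤ U y
  nonconst : ∃ x y : ℝ, 0 < x ∧ 0 < y ∧ U x ≠ U y
  usc : UpperSemicontinuousOn U (Set.Ioi 0)
  growth : Filter.Tendsto (fun x => U x / x) Filter.atTop (nhds 0)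
  pos_limit : ∃ x : ℝ, 0 < x ∧ 0 < U x

/-- Concavity for `EReal`-valued functions on `ℝ`. -/
def ERealConcave (g : ℝ → EReal) : Prop :=
  ∀ x y : ℝ, ∀ t : ℝ, 0 ≤ t → t ≤ 1 →
    ((t : ℝ) : EReal) * g x + (((1 - t) : ℝ) : EReal) * g y ≤ g (t * x + (1 - t) * y)

/-- `Uc` is the concave envelope of the utility `U`: the smallest concave function
dominating (the extension of) `U`. -/
def IsConcaveEnvelope (U : ℝ → ℝ) (Uc : ℝ → EReal) : Prop :=
  ERealConcave Uc ∧ (∀ x : ℝ, Uext U x ≤ Uc x) ∧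
    ∀ g : ℝ → EReal, ERealConcave g → (∀ x : ℝ, Uext U x ≤ g x) → ∀ x : ℝ, Uc x ≤ g x

/-- The convex conjugate `V(y) = sup_{x > 0} (U(x) − x y)`. -/
def conj (U : ℝ → ℝ) (y : ℝ) : ℝ :=
  sSup ((fun x => U x - x * y) '' Set.Ioi (0 : ℝ))

/-- The subdifferential of a convex function `V` (viewed on `(0,∞)`). -/
def subdiff (V : ℝ → ℝ) (y : ℝ) : Set ℝ :=
  {q : ℝ | ∀ z : ℝ, 0 < z → V y + q * (z - y) ≤ V z}

/-- The extended asymptotic elasticity `EAE(V) = limsup_{y ↓ 0} sup_{q ∈ ∂V(y)} |q| y / V(y)`. -/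
def EAE (V : ℝ → ℝ) : EReal :=
  Filter.limsup (fun y : ℝ => ⨆ q ∈ subdiff V y, (((|q| * y / V y) : ℝ) : EReal))
    (nhdsWithin (0 : ℝ) (Set.Ioi 0))

/-- The positive part of an extended real number, as an element of `ℝ≥0∞`. -/
def erealPos (a : EReal) : ℝ≥0∞ := if a = ⊤ then ⊤ else ENNReal.ofReal a.toReal

/-- The expectation of an `EReal`-valued function: `E[g] = E[g⁺] − E[g⁻]`, with the
convention `E[g] = −∞` whenever the negative part `g⁻` is not integrable. -/
def eexp {Ω : Type*} [MeasurableSpace Ω] (μ : Measure Ω) (g : Ω → EReal) : EReal :=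
  if (∫⁻ ω, erealPos (-(g ω)) ∂μ) < ⊤ then
    ((∫⁻ ω, erealPos (g ω) ∂μ : ℝ≥0∞) : EReal) - (((∫⁻ ω, erealPos (-(g ω)) ∂μ).toReal : ℝ) : EReal)
  else ⊥

/-- The set `C(x)` of attainable terminal liquidation values: nonnegative measurable `f`
with `E[Z f] ≤ x`. -/
def Cset {Ω : Type*} [MeasurableSpace Ω] (μ : Measure Ω) (Z : Ω → ℝ) (x : ℝ) :
    Set (Ω → ℝ) :=
  {f | Measurable f ∧ (∀ ω, 0 ≤ f ω) ∧
    (∫⁻ ω, ENNReal.ofReal (Z ω * f ω) ∂μ) ≤ ENNReal.ofReal x}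

/-- The value function `u(x, W) = sup {E[W(f)] : f ∈ C(x)}`. -/
def valueFn {Ω : Type*} [MeasurableSpace Ω] (μ : Measure Ω) (Z : Ω → ℝ)
    (W : ℝ → EReal) (x : ℝ) : EReal :=
  ⨆ f ∈ Cset μ Z x, eexp μ (fun ω => W (f ω))

end

/-- At `x = 0`, where `Uext U 0` is an infimum over `z > 0`, the bound by `a` comes from letting
`z ↓ 0`. -/
lemma concaveEnvelope_le_affine {U : ℝ → ℝ} {Uc : ℝ → EReal} (hUc : IsConcaveEnvelope U Uc)
    {a b : ℝ} (hb : 0 ≤ b) (h : ∀ z : ℝ, 0 < z → U z ≤ a + b * z) (x : ℝ) :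
    Uc x ≤ ((a + b * x : ℝ) : EReal) := by
  refine hUc.2.2 (fun x => ((a + b * x : ℝ) : EReal)) ?_ ?_ x
  · intro x y t _ _
    rw [← EReal.coe_mul, ← EReal.coe_mul, ← EReal.coe_add, EReal.coe_le_coe_iff]
    apply le_of_eq
    ring
  · intro x
    unfold Uext
    split_ifs with hx hx0
    · exact EReal.coe_le_coe_iff.2 (h x hx)
    · subst hx0
      rw [mul_zero, add_zero]
      refine EReal.le_of_forall_lt_iff_le.1 fun c hc => ?_
      have hac : a < c := EReal.coe_lt_coe_iff.1 hc
      have hz : 0 < (c - a) / (b + 1) := div_pos (by linarith) (by linarith)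
      refine (iInf_le _ (⟨(c - a) / (b + 1), hz⟩ : {z : ℝ // 0 < z})).trans ?_
      rw [EReal.coe_le_coe_iff]
      refine (h _ hz).trans ?_
      have h1 : (c - a) / (b + 1) * (b + 1) = c - a := div_mul_cancel₀ _ (by linarith)
      nlinarith
    · exact bot_le

/-- Sublinear growth makes `conj U y` a genuine supremum rather than a junk value. -/
lemma IsUtility.bddAbove_conj {U : ℝ → ℝ} (hU : IsUtility U) {y : ℝ} (hy : 0 < y) :
    BddAbove ((fun x => U x - x * y) '' Set.Ioi (0 : ℝ)) := by
  obtain ⟨M, hM⟩ := eventually_atTop.1 ((hU.growth.eventually (gt_mem_nhds hy)).and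
    (eventually_gt_atTop (0 : ℝ)))
  have hM0 : 0 < M := (hM M le_rfl).2
  refine ⟨max (U M) 0, ?_⟩
  rintro _ ⟨x, hx, rfl⟩
  have hx' : 0 < x := hx
  have hxy := mul_pos hx' hy
  dsimp only
  rcases le_total x M with h | h
  · have := hU.mono hx' h
    exact le_max_of_le_left (by linarith)
  · have := (hM x h).1
    rw [div_lt_iff₀ hx'] at this
    exact le_max_of_le_right (by nlinarith)

lemma IsUtility.le_conj {U : ℝ → ℝ} (hU : IsUtility U) {y z : ℝ} (hy : 0 < y) (hz : 0 < z) :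
    U z - z * y ≤ conj U y :=
  le_csSup (hU.bddAbove_conj hy) ⟨z, hz, rfl⟩

lemma conj_le {U : ℝ → ℝ} {y a : ℝ} (h : ∀ z : ℝ, 0 < z → U z - z * y ≤ a) :
    conj U y ≤ a := by
  refine csSup_le (Set.nonempty_Ioi.image _) ?_
  rintro _ ⟨z, hz, rfl⟩
  exact h z hz

lemma IsUtility.convexOn_conj {U : ℝ → ℝ} (hU : IsUtility U) :
    ConvexOn ℝ (Set.Ioi 0) (conj U) := by
  refine ⟨convex_Ioi 0, ?_⟩
  intro x hx y hy s t hs ht hst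
  simp only [smul_eq_mul]
  refine conj_le fun z hz => ?_
  have h1 := mul_le_mul_of_nonneg_left (hU.le_conj hx hz) hs
  have h2 := mul_le_mul_of_nonneg_left (hU.le_conj hy hz) ht
  have h3 : U z = s * U z + t * U z := by rw [← add_mul, hst, one_mul]
  linarith

/-- An unbounded `U` makes `V` blow up at `0`, so for steep slopes `p` the function
`y ↦ V y + p y` is coercive on `(0, ∞)` and its minimum is attained at a point below `b`. -/
lemma exists_conj_minimizer {U : ℝ → ℝ} (hU : IsUtility U)
    (hunb : ¬ BddAbove (U '' Set.Ioi (0 : ℝ))) {b p : ℝ} (hb : 0 < b)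
    (hp1 : 1 < p) (hp : conj U (b / 2) - U 1 + b < p * (b / 2)) :
    ∃ y : ℝ, 0 < y ∧ y < b ∧ ∀ w : ℝ, 0 < w → conj U y + p * y ≤ conj U w + p * w := by
  -- `m` is the value at the reference point `b / 2`, beaten neither near `0` nor beyond `b`.
  set m := conj U (b / 2) + p * (b / 2) with hm
  have hfar : ∀ w, b ≤ w → m < conj U w + p * w := by
    intro w hw
    have h1 := hU.le_conj (y := w) (by linarith) one_pos
    nlinarith
  obtain ⟨_, ⟨z, hz, rfl⟩, hUz⟩ := not_bddAbove_iff.1 hunb (m + 1)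
  have hz' : 0 < z := hz
  have hnear : ∀ w, 0 < w → w < 1 / z → m < conj U w + p * w := by
    intro w hw hwz
    have h1 := hU.le_conj hw hz'
    have h2 : w * z < 1 := (lt_div_iff₀ hz').1 hwz
    nlinarith [mul_pos (by linarith : 0 < p) hw]
  have hz0 : 0 < 1 / z := by positivity
  have hzb : 1 / z ≤ b / 2 := by
    by_contra! hcon
    exact lt_irrefl _ (hnear (b / 2) (by linarith) hcon)
  have hcont : ContinuousOn (fun w => conj U w + p * w) (Set.Icc (1 / z) b) := by
    refine ContinuousOn.add ?_ (by fun_prop)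
    exact (hU.convexOn_conj.continuousOn isOpen_Ioi).mono fun w hw => lt_of_lt_of_le hz0 hw.1
  have hmem : b / 2 ∈ Set.Icc (1 / z) b := ⟨hzb, by linarith⟩
  obtain ⟨y, hy, hmin⟩ := isCompact_Icc.exists_isMinOn ⟨_, hmem⟩ hcont
  have hym : conj U y + p * y ≤ m := hmin hmem
  refine ⟨y, lt_of_lt_of_le hz0 hy.1, ?_, ?_⟩
  · by_contra! hcon
    exact absurd (hfar y hcon) (not_lt.2 hym)
  · intro w hw
    rcases lt_or_ge w (1 / z) with h | h
    · exact hym.trans (hnear w hw h).le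
    · rcases le_or_gt b w with h' | h'
      · exact hym.trans (hfar w h').le
      · exact hmin ⟨h, h'.le⟩

/-- Finite `EAE` in usable form. The threshold `b` also ensures `0 < V y`, so the division in
`EAE` can be cleared. -/
lemma exists_elasticity_bound {U : ℝ → ℝ} (hU : IsUtility U) (hEAE : EAE (conj U) < ⊤) :
    ∃ C : ℝ, 0 < C ∧ ∃ b : ℝ, 0 < b ∧ ∀ y : ℝ, 0 < y → y < b →
      0 < conj U y ∧ ∀ q ∈ subdiff (conj U) y, |q| * y ≤ C * conj U y := by
  obtain ⟨C, hC, -⟩ := EReal.lt_iff_exists_real_btwn.1 hEAE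
  have hev := eventually_lt_of_limsup_lt hC
  obtain ⟨b, hb, hbC⟩ := mem_nhdsGT_iff_exists_Ioo_subset.1 hev
  have hb' : 0 < b := hb
  obtain ⟨z, hz, hUz⟩ := hU.pos_limit
  refine ⟨max C 1, by positivity, min b (U z / z), lt_min hb' (div_pos hUz hz), ?_⟩
  intro y hy hyb
  have hV : 0 < conj U y := by
    have h1 := hU.le_conj hy hz
    have h2 := (lt_div_iff₀ hz).1 (hyb.trans_le (min_le_right _ _))
    linarith
  refine ⟨hV, fun q hq => ?_⟩
  have h1 : (⨆ q ∈ subdiff (conj U) y, (((|q| * y / conj U y) : ℝ) : EReal)) < C :=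
    hbC ⟨hy, hyb.trans_le (min_le_left _ _)⟩
  have h2 : (((|q| * y / conj U y) : ℝ) : EReal) < C :=
    (le_iSup₂ (f := fun q (_ : q ∈ subdiff (conj U) y) =>
      (((|q| * y / conj U y) : ℝ) : EReal)) q hq).trans_lt h1
  have h3 := EReal.coe_lt_coe_iff.1 h2
  exact (div_le_iff₀ hV).1 (h3.le.trans (le_max_left _ _))

/-- If `V` has the subgradient `-x / 2` at `y` and the elasticity there is at most `C`, then
`V y ≤ 2 U x`: at the slope `(1 + 1 / (2 C)) y` the supremum defining `V` is exhausted by points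
`z ≤ x`, and `V` still retains half of `V y`. -/
lemma conj_le_two_mul {U : ℝ → ℝ} (hU : IsUtility U) {x y C : ℝ} (hx : 0 < x) (hy : 0 < y)
    (hC : 0 < C)
    (hmin : ∀ w : ℝ, 0 < w → conj U y + x / 2 * y ≤ conj U w + x / 2 * w)
    (hel : x / 2 * y ≤ C * conj U y) : conj U y ≤ 2 * U x := by
  set d := 1 / (2 * C) * y with hd
  have hd0 : 0 < d := by positivity
  have hdx : x / 2 * d ≤ conj U y / 2 := by
    have : x / 2 * d = 1 / (2 * C) * (x / 2 * y) := by rw [hd]; ring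
    rw [this]
    calc 1 / (2 * C) * (x / 2 * y) ≤ 1 / (2 * C) * (C * conj U y) := by gcongr
      _ = conj U y / 2 := by field_simp
  have h1 := hmin (y + d) (by linarith)
  have hxd : 0 < x * d := mul_pos hx hd0
  have h2 : conj U (y + d) ≤ max (U x) (conj U (y + d) - x / 2 * d) := by
    refine conj_le fun z hz => ?_
    rcases le_or_gt z x with h | h
    · refine le_max_of_le_left ?_
      have := hU.mono hz h
      have := mul_pos hz (by linarith : 0 < y + d)
      linarith
    · refine le_max_of_le_right ?_
      have := hU.le_conj hy hz
      have := mul_lt_mul_of_pos_right h hd0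
      linarith
  rcases le_max_iff.1 h2 with h | h <;> linarith

/-- If `EAE(V) < ∞`, then there exist `x₀ > 0` and `k > 0` such that
`0 ≤ U_c(x) ≤ k U(x)` for all `x ∈ (x₀, ∞)`. -/
theorem envelope_dominated_of_EAE_lt_top
    (U : ℝ → ℝ) (hU : IsUtility U) (Uc : ℝ → EReal) (hUc : IsConcaveEnvelope U Uc)
    (hEAE : EAE (conj U) < ⊤) :
    ∃ x₀ : ℝ, 0 < x₀ ∧ ∃ k : ℝ, 0 < k ∧ ∀ x : ℝ, x₀ < x →
      (0 : EReal) ≤ Uc x ∧ Uc x ≤ (((k * U x) : ℝ) : EReal) := by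
  obtain ⟨z, hz, hUz⟩ := hU.pos_limit
  have hnonneg : ∀ x, z < x → (0 : EReal) ≤ Uc x := by
    intro x hx
    have h1 := hUc.2.1 x
    rw [Uext, if_pos (hz.trans hx)] at h1
    refine le_trans ?_ h1
    exact_mod_cast hUz.le.trans (hU.mono hz hx.le)
  by_cases hbdd : BddAbove (U '' Set.Ioi (0 : ℝ))
  · set S := sSup (U '' Set.Ioi (0 : ℝ)) with hS
    have hle : ∀ w, 0 < w → U w ≤ S := fun w hw => le_csSup hbdd ⟨w, hw, rfl⟩
    have hSpos : 0 < S := hUz.trans_le (hle z hz)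
    obtain ⟨_, ⟨w, hw, rfl⟩, hUw⟩ := exists_lt_of_lt_csSup
      (Set.nonempty_Ioi.image U) (show S / 2 < sSup (U '' Set.Ioi (0 : ℝ)) by rw [← hS]; linarith)
    refine ⟨max z w, lt_max_of_lt_left hz, 2, two_pos, fun x hx => ?_⟩
    refine ⟨hnonneg x ((le_max_left _ _).trans_lt hx), ?_⟩
    refine (concaveEnvelope_le_affine hUc (a := S) (b := 0) le_rfl
      (fun w hw => by linarith [hle w hw]) x).trans ?_
    rw [EReal.coe_le_coe_iff]
    have := hU.mono hw ((le_max_right z w).trans_lt hx).le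
    linarith
  · obtain ⟨C, hC, b, hb, hbC⟩ := exists_elasticity_bound hU hEAE
    -- `T` is the slope from which `exists_conj_minimizer` applies to `p = x / 2`.
    set T := max 1 ((conj U (b / 2) - U 1 + b) / (b / 2)) with hT
    refine ⟨max z (2 * T), lt_max_of_lt_left hz, 2 * (1 + 2 * C), by positivity,
      fun x hx => ?_⟩
    have hzx := (le_max_left _ _).trans_lt hx
    have hTx : T < x / 2 := by linarith [(le_max_right z (2 * T)).trans_lt hx]
    have hx0 : 0 < x := hz.trans hzx
    refine ⟨hnonneg x hzx, ?_⟩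
    obtain ⟨y, hy, hyb, hmin⟩ := exists_conj_minimizer hU hbdd hb
      ((le_max_left _ _).trans_lt hTx)
      ((div_lt_iff₀ (by linarith)).1 ((le_max_right _ _).trans_lt hTx))
    have hsub : -(x / 2) ∈ subdiff (conj U) y := fun w hw => by linarith [hmin w hw]
    have hel := (hbC y hy hyb).2 _ hsub
    rw [abs_neg, abs_of_pos (by linarith)] at hel
    have hVU := conj_le_two_mul hU hx0 hy hC hmin hel
    refine (concaveEnvelope_le_affine hUc (a := conj U y) (b := y) hy.le
      (fun w hw => by linarith [hU.le_conj hy hw]) x).trans ?_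
    rw [EReal.coe_le_coe_iff]
    calc conj U y + y * x ≤ (1 + 2 * C) * conj U y := by linarith
      _ ≤ (1 + 2 * C) * (2 * U x) := by gcongr
      _ = 2 * (1 + 2 * C) * U x := by ring
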